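/- Let ν ∈ [0,1] and set σ_1(x) = 1 - cosh(νx)/(2 cosh x) and σ_2(x) = cosh(νx)/cosh(x) for x > 0. Then the Laplace transforms L(σ_1) and L(σ_2) are generalized Stieltjes functions of order 2 (hence logarithmically completely monotonic), and for x > 0: L(σ_1)(x) = 1/x - (1/4)(β((x+1-ν)/2) + β((x+1+ν)/2)) and L(σ_2)(x) = (1/2)(β((x+1-ν)/2) + β((x+1+ν)/2)), where β is Nielsen's beta function. -/

import Mathlib

open MeasureTheory Filter Set

/-- The Laplace transform of `g`. -/
noncomputable def LaplaceTransform (g : ℝ → ℝ) (x : ℝ) : ℝ :=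
  ∫ t in Set.Ioi (0:ℝ), Real.exp (-x * t) * g t

/-- `f` is completely monotonic on `(0,∞)`. -/
def CompletelyMonotonic (f : ℝ → ℝ) : Prop :=
  (∀ x : ℝ, 0 < x → ContDiffAt ℝ (⊤ : ℕ∞) f x) ∧
  ∀ (n : ℕ) (x : ℝ), 0 < x → 0 ≤ (-1 : ℝ) ^ n * iteratedDeriv n f x

/-- `f` is logarithmically completely monotonic on `(0,∞)`. -/
def LogCompletelyMonotonic (f : ℝ → ℝ) : Prop :=
  (∀ x : ℝ, 0 < x → 0 < f x) ∧ (∀ x : ℝ, 0 < x → ContDiffAt ℝ (⊤ : ℕ∞) f x) ∧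
  CompletelyMonotonic (fun x => -deriv f x / f x)

/-- `f` is a generalized Stieltjes function of order `lam` on `(0,∞)`. -/
def IsGenStieltjes (lam : ℝ) (f : ℝ → ℝ) : Prop :=
  ∃ (μ : Measure ℝ) (c : ℝ), 0 ≤ c ∧ μ (Set.Iio 0) = 0 ∧
    ∀ x : ℝ, 0 < x →
      Integrable (fun t => (x + t) ^ (-lam)) μ ∧
      f x = (∫ t, (x + t) ^ (-lam) ∂μ) + c

/-- Nielsen's beta function. -/
noncomputable def nielsenBeta (x : ℝ) : ℝ :=
  ∫ t in Set.Ioi (0:ℝ), Real.exp (-x * t) / (1 + Real.exp (-t))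


open InnerProductSpace in
lemma core_abs {E : Type*} [NormedAddCommGroup E] [InnerProductSpace ℂ E] (A : E →ₗ[ℂ] E) {m : ℕ}
    (x : Fin m → E) (ζ : Fin m → ℂ) (hζ : Function.Injective ζ) (hx : ∀ j, x j ≠ 0)
    (h : ∀ i j, 2 * inner ℂ (x j) (A (x i)) + (ζ i + (starRingEnd ℂ) (ζ j)) * inner ℂ (x j) (x i) = 0) :
    ∃ u : Fin m → E, Orthonormal ℂ u ∧ ∀ j, (inner ℂ (u j) (A (u j))).re = - (ζ j).re := by
  -- linear independence
  have step : ∀ α : Fin m → ℂ, ∑ i, α i • x i = 0 → ∑ i, (α i * ζ i) • x i = 0 := by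
    intro α hα
    have h1 : ∀ j, inner ℂ (x j) (∑ i, (α i * ζ i) • x i) = 0 := by
      intro j
      have e1 : ∑ i, α i * (2 * inner ℂ (x j) (A (x i)) + (ζ i + (starRingEnd ℂ) (ζ j)) * inner ℂ (x j) (x i)) = 0 := by
        simp [h]
      have e2 : ∑ i, α i * inner ℂ (x j) (A (x i)) = 0 := by
        have : inner ℂ (x j) (A (∑ i, α i • x i)) = 0 := by rw [hα]; simp
        simpa [inner_sum, inner_smul_right] using this
      have e3 : ∑ i, α i * inner ℂ (x j) (x i) = 0 := by
        have : inner ℂ (x j) ((∑ i, α i • x i)) = 0 := by rw [hα]; simp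
        simpa [inner_sum, inner_smul_right] using this
      simp only [inner_sum, inner_smul_right]
      have e4 : ∑ i, α i * (2 * inner ℂ (x j) (A (x i)) + (ζ i + (starRingEnd ℂ) (ζ j)) * inner ℂ (x j) (x i))
        = 2 * ∑ i, α i * inner ℂ (x j) (A (x i)) + ∑ i, α i * ζ i * inner ℂ (x j) (x i)
          + (starRingEnd ℂ) (ζ j) * ∑ i, α i * inner ℂ (x j) (x i) := by
        simp only [Finset.mul_sum, ← Finset.sum_add_distrib]
        exact Finset.sum_congr rfl fun i _ => by ring
      rw [e4, e2, e3] at e1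
      simpa using e1
    have h2 : inner ℂ (∑ i, (α i * ζ i) • x i) (∑ i, (α i * ζ i) • x i) = 0 := by
      conv_lhs => rw [sum_inner]
      refine Finset.sum_eq_zero fun j _ => ?_
      rw [inner_smul_left, h1 j, mul_zero]
    exact inner_self_eq_zero.1 h2
  have hli : LinearIndependent ℂ x := by
    rw [Fintype.linearIndependent_iff]
    intro α hα
    have hp : ∀ k : ℕ, ∑ i, (α i * ζ i ^ k) • x i = 0 := by
      intro k
      induction k with
      | zero => simpa using hα
      | succ k ih =>
        have := step _ ih
        simpa [pow_succ, mul_assoc] using this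
    intro i
    have hv : (fun l => α l * inner ℂ (x i) (x l)) = 0 := by
      apply Matrix.eq_zero_of_forall_pow_sum_mul_pow_eq_zero hζ
      intro k
      have : inner ℂ (x i) (∑ l, (α l * ζ l ^ (k:ℕ)) • x l) = 0 := by rw [hp]; simp
      simp only [inner_sum, inner_smul_right] at this
      rw [← this]
      exact Finset.sum_congr rfl fun l _ => by ring
    have := congrFun hv i
    simp only [Pi.zero_apply, mul_eq_zero, inner_self_eq_zero, hx i, or_false] at this
    exact this
  refine ⟨gramSchmidtNormed ℂ x, gramSchmidtNormed_orthonormal hli, fun j => ?_⟩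
  have hmem : gramSchmidtNormed ℂ x j ∈ Submodule.span ℂ (Set.image x (Set.Iic j)) := by
    rw [← span_gramSchmidt_Iic ℂ x j, ← span_gramSchmidtNormed x]
    exact Submodule.subset_span ⟨j, by simp, rfl⟩
  have hort : ∀ i, i < j → inner ℂ (gramSchmidtNormed ℂ x j) (x i) = 0 := by
    intro i hi
    rw [gramSchmidtNormed, inner_smul_left, gramSchmidt_inv_triangular ℂ x hi, mul_zero]
  have hnorm : inner ℂ (gramSchmidtNormed ℂ x j) (gramSchmidtNormed ℂ x j) = 1 := by
    rw [inner_self_eq_norm_sq_to_K, gramSchmidtNormed_unit_length j hli]; simp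
  generalize gramSchmidtNormed ℂ x j = u at *
  rw [Finsupp.mem_span_image_iff_linearCombination] at hmem
  obtain ⟨l, hl, hlu⟩ := hmem
  have hu : u = ∑ i, l i • x i := by
    rw [← hlu, Finsupp.linearCombination_apply, Finsupp.sum_fintype]; simp
  have hl0 : ∀ i, j < i → l i = 0 := by
    intro i hi
    by_contra hne
    have : i ∈ (l.support : Set (Fin m)) := by simpa using hne
    have := (Finsupp.mem_supported _ _).1 hl this
    simp at this
    exact absurd hi (not_lt.2 this)
  have hz : ∀ i, l i * inner ℂ u (x i) ≠ 0 → i = j := by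
    intro i hne
    rcases lt_trichotomy i j with hij | hij | hij
    · simp [hort i hij] at hne
    · exact hij
    · simp [hl0 i hij] at hne
  have hone : ∑ i, l i * inner ℂ u (x i) = 1 := by
    rw [← hnorm]
    conv_rhs => rw [hu, ← hu]
    nth_rewrite 3 [hu]
    simp [inner_sum, inner_smul_right]
  have hd : ∑ i, ζ i * (l i * inner ℂ u (x i)) = ζ j := by
    have : ∑ i, ζ i * (l i * inner ℂ u (x i)) = ∑ i, ζ j * (l i * inner ℂ u (x i)) := by
      refine Finset.sum_congr rfl fun i _ => ?_
      by_cases hne : l i * inner ℂ u (x i) = 0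
      · simp [hne]
      · rw [hz i hne]
    rw [this, ← Finset.mul_sum, hone, mul_one]
  have hfin : 2 * inner ℂ u (A u) + ζ j + (starRingEnd ℂ) (ζ j) = 0 := by
    have e1 : ∑ k, (starRingEnd ℂ) (l k) * ∑ i, l i * (2 * inner ℂ (x k) (A (x i)) + (ζ i + (starRingEnd ℂ) (ζ k)) * inner ℂ (x k) (x i)) = 0 := by
      simp [h]
    have e2 : inner ℂ u (A u) = ∑ k, (starRingEnd ℂ) (l k) * ∑ i, l i * inner ℂ (x k) (A (x i)) := by
      rw [hu]; simp [inner_sum, sum_inner, inner_smul_right, inner_smul_left, Finset.mul_sum]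
      rw [Finset.sum_comm]
      refine Finset.sum_congr rfl fun i _ => Finset.sum_congr rfl fun k _ => by ring
    have e3 : ζ j = ∑ k, (starRingEnd ℂ) (l k) * ∑ i, l i * (ζ i * inner ℂ (x k) (x i)) := by
      rw [← hd];
      have : ∀ i, inner ℂ u (x i) = ∑ k, (starRingEnd ℂ) (l k) * inner ℂ (x k) (x i) := by
        intro i; rw [hu, sum_inner]; exact Finset.sum_congr rfl fun k _ => by rw [inner_smul_left]
      simp only [this, Finset.mul_sum]
      rw [Finset.sum_comm]
      refine Finset.sum_congr rfl fun i _ => Finset.sum_congr rfl fun k _ => by ring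
    have e4 : (starRingEnd ℂ) (ζ j) = ∑ k, (starRingEnd ℂ) (l k) * ∑ i, l i * ((starRingEnd ℂ) (ζ k) * inner ℂ (x k) (x i)) := by
      rw [e3]
      simp only [map_sum, map_mul, Complex.conj_conj, inner_conj_symm, Finset.mul_sum]
      rw [Finset.sum_comm]
      refine Finset.sum_congr rfl fun i _ => Finset.sum_congr rfl fun k _ => by ring
    conv_lhs => rw [e2, e4]
    nth_rewrite 1 [e3]
    rw [← e1]
    simp only [Finset.mul_sum, ← Finset.sum_add_distrib]
    refine Finset.sum_congr rfl fun i _ => Finset.sum_congr rfl fun k _ => by ring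
  have := congrArg Complex.re hfin
  simp at this
  linarith

lemma core {ι : Type*} [Fintype ι] [Nonempty ι] (t a : ι → ℝ) (ha : ∀ i, 0 < a i) (c : ℝ) {m : ℕ} (ζ : Fin m → ℂ)
    (hζ : Function.Injective ζ) (hne : ∀ j i, ζ j + t i ≠ 0)
    (hc : ∀ i j, ζ i ≠ (starRingEnd ℂ) (ζ j))
    (hr : ∀ j, ∑ i, (a i : ℂ) / (ζ j + t i) ^ 2 = - (c : ℂ)) :
    ∃ w : Fin m → ι → ℝ, (∀ j i, 0 ≤ w j i) ∧ (∀ j, ∑ i, w j i = 1) ∧ (∀ i, ∑ j, w j i ≤ 1) ∧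
      ∀ j, ∑ i, w j i * t i = - (ζ j).re := by
  classical
  let A : EuclideanSpace ℂ ι →ₗ[ℂ] EuclideanSpace ℂ ι :=
    { toFun := fun x => WithLp.toLp 2 (fun i => (t i : ℂ) * x i)
      map_add' := by intro x y; ext i; simp [mul_add]
      map_smul' := by intro r x; ext i; simp; ring }
  let x : Fin m → EuclideanSpace ℂ ι := fun j => WithLp.toLp 2 (fun i => (Real.sqrt (a i) : ℂ) / (ζ j + t i) ^ 2)
  have hne' : ∀ j i, (starRingEnd ℂ) (ζ j) + t i ≠ 0 := by
    intro j i h0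
    apply hne j i
    have := congrArg (starRingEnd ℂ) h0
    simpa using this
  obtain ⟨u, hu, hu2⟩ := core_abs A x ζ hζ (by
    intro j h0
    obtain ⟨i⟩ := ‹Nonempty ι›
    have : x j i = 0 := by rw [h0]; simp
    simp only [x, div_eq_zero_iff] at this
    have h2 := pow_ne_zero 2 (hne j i)
    have h3 := (Real.sqrt_pos.2 (ha i)).ne'
    rcases this with h | h
    · exact h3 (by exact_mod_cast h)
    · exact h2 h) (by
    intro i j
    simp only [PiLp.inner_apply, RCLike.inner_apply, A, x, LinearMap.coe_mk, AddHom.coe_mk, map_div₀, map_pow, map_add, Complex.conj_ofReal]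
    have hr2 : ∑ k, (a k : ℂ) / ((starRingEnd ℂ) (ζ j) + t k) ^ 2 = - (c : ℂ) := by
      have := congrArg (starRingEnd ℂ) (hr j)
      simpa using this
    have hd : (starRingEnd ℂ) (ζ j) - ζ i ≠ 0 := sub_ne_zero.2 (hc i j).symm
    have key : ∑ k, ((a k : ℂ) / (ζ i + t k) ^ 2 - (a k : ℂ) / ((starRingEnd ℂ) (ζ j) + t k) ^ 2) = 0 := by
      rw [Finset.sum_sub_distrib, hr, hr2]; ring
    rw [Finset.mul_sum, Finset.mul_sum, ← Finset.sum_add_distrib]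
    apply mul_left_cancel₀ hd
    rw [mul_zero, ← key, Finset.mul_sum]
    refine Finset.sum_congr rfl fun k _ => ?_
    have h1 := hne i k
    have h2 := hne' j k
    have hs : (Real.sqrt (a k) : ℂ) ^ 2 = a k := by
      rw [← Complex.ofReal_pow, Real.sq_sqrt (ha k).le]
    rw [← hs]
    field_simp
    ring)
  refine ⟨fun j i => ‖u j i‖ ^ 2, fun _ _ => by positivity, fun j => ?_, fun i => ?_, fun j => ?_⟩
  · rw [← EuclideanSpace.norm_sq_eq, hu.1 j]; norm_num
  · have := hu.sum_inner_products_le (s := Finset.univ) (EuclideanSpace.single i (1:ℂ))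
    simpa [EuclideanSpace.inner_single_right] using this
  · rw [← hu2 j]
    simp only [PiLp.inner_apply, RCLike.inner_apply, A, LinearMap.coe_mk, AddHom.coe_mk, Complex.re_sum]
    refine Finset.sum_congr rfl fun k _ => ?_
    rw [mul_assoc, RCLike.mul_conj]
    simp [← Complex.ofReal_pow, mul_comm]


lemma chain_iter (J : ℕ → ℝ → ℝ) (hJ : ∀ n x, 0 < x → HasDerivAt (J n) (J (n+1) x) x) (n : ℕ) (x : ℝ) (hx : 0 < x) :
    iteratedDeriv n (J 0) x = J n x := by
  induction n generalizing x with
  | zero => simp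
  | succ n ih =>
    rw [iteratedDeriv_succ]
    have : iteratedDeriv n (J 0) =ᶠ[nhds x] J n := by
      filter_upwards [lt_mem_nhds hx] with y hy using ih y hy
    rw [this.deriv_eq, (hJ n x hx).deriv]

lemma chain_smooth (J : ℕ → ℝ → ℝ) (hJ : ∀ n x, 0 < x → HasDerivAt (J n) (J (n+1) x) x) (k : ℕ) (x : ℝ) (hx : 0 < x) :
    ContDiffAt ℝ (⊤ : ℕ∞) (J k) x := by
  have key : ∀ n : ℕ, ∀ k, ContDiffOn ℝ n (J k) (Ioi 0) := by
    intro n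
    induction n with
    | zero =>
      intro k
      simp only [Nat.cast_zero, contDiffOn_zero]
      exact fun y hy => (hJ k y hy).continuousAt.continuousWithinAt
    | succ n ih =>
      intro k
      push_cast
      rw [contDiffOn_succ_iff_deriv_of_isOpen isOpen_Ioi]
      refine ⟨fun y hy => (hJ k y hy).differentiableAt.differentiableWithinAt, ?_, ?_⟩
      · intro h; exfalso; exact absurd h (by simp)
      · exact (ih (k+1)).congr fun y hy => (hJ k y hy).deriv
  have : ContDiffOn ℝ (⊤ : ℕ∞) (J k) (Ioi 0) := contDiffOn_infty.2 fun n => key n k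
  exact this.contDiffAt (Ioi_mem_nhds hx)

lemma cm_of_chain (J : ℕ → ℝ → ℝ) (hJ : ∀ n x, 0 < x → HasDerivAt (J n) (J (n+1) x) x)
    (hpos : ∀ n x, 0 < x → 0 ≤ (-1 : ℝ)^n * J n x) (f : ℝ → ℝ) (hf : ∀ x, 0 < x → f x = J 0 x) :
    CompletelyMonotonic f := by
  have he : ∀ x, 0 < x → f =ᶠ[nhds x] J 0 := fun x hx => by
    filter_upwards [lt_mem_nhds hx] with y hy using hf y hy
  refine ⟨fun x hx => (chain_smooth J hJ 0 x hx).congr_of_eventuallyEq (he x hx), fun n x hx => ?_⟩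
  rw [(he x hx).iteratedDeriv_eq, chain_iter J hJ n x hx]
  exact hpos n x hx

lemma quot_smooth (J : ℕ → ℝ → ℝ) (hJ : ∀ n x, 0 < x → HasDerivAt (J n) (J (n+1) x) x)
    (hpos : ∀ x, 0 < x → 0 < J 0 x) (x : ℝ) (hx : 0 < x) :
    ContDiffAt ℝ (⊤ : ℕ∞) (fun x => - J 1 x / J 0 x) x :=
  (chain_smooth J hJ 1 x hx).neg.div (chain_smooth J hJ 0 x hx) (hpos x hx).ne'

lemma quot_rec (J : ℕ → ℝ → ℝ) (hJ : ∀ n x, 0 < x → HasDerivAt (J n) (J (n+1) x) x)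
    (hpos : ∀ x, 0 < x → 0 < J 0 x) (n : ℕ) (x : ℝ) (hx : 0 < x) :
    iteratedDeriv n (fun x => - J 1 x / J 0 x) x =
      (- J (n+1) x - ∑ i ∈ Finset.range n, n.choose (i+1) * J (i+1) x * iteratedDeriv (n - (i+1)) (fun x => - J 1 x / J 0 x) x) / J 0 x := by
  have h1 := iteratedDeriv_mul (n := n) ((chain_smooth J hJ 0 x hx).of_le (by exact_mod_cast le_top))
    ((quot_smooth J hJ hpos x hx).of_le (by exact_mod_cast le_top))
  have h2 : (J 0 * fun x => - J 1 x / J 0 x) =ᶠ[nhds x] fun x => - J 1 x := by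
    filter_upwards [lt_mem_nhds hx] with y hy
    have := (hpos y hy).ne'
    simp only [Pi.mul_apply]; field_simp
  have h3 : iteratedDeriv n (fun x => - J 1 x) x = - J (n+1) x := by
    have := chain_iter (fun k x => - J (k+1) x) (fun k y hy => (hJ (k+1) y hy).neg) n x hx
    simpa using this
  rw [h2.iteratedDeriv_eq, h3, Finset.sum_range_succ'] at h1
  simp only [Nat.choose_zero_right, Nat.cast_one, one_mul, iteratedDeriv_zero, Nat.sub_zero] at h1
  rw [eq_div_iff (hpos x hx).ne', h1]
  have : ∀ i, iteratedDeriv (i+1) (J 0) x = J (i+1) x := fun i => chain_iter J hJ (i+1) x hx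
  simp only [this]
  ring

lemma quot_limit {κ : Type*} {l : Filter κ} [l.NeBot] (J : κ → ℕ → ℝ → ℝ) (K : ℕ → ℝ → ℝ)
    (hJ : ∀ᶠ k in l, (∀ n x, 0 < x → HasDerivAt (J k n) (J k (n+1) x) x) ∧ (∀ x, 0 < x → 0 < J k 0 x) ∧
      CompletelyMonotonic (fun x => - J k 1 x / J k 0 x))
    (hK : ∀ n x, 0 < x → HasDerivAt (K n) (K (n+1) x) x)
    (hKp : ∀ x, 0 < x → 0 < K 0 x)
    (hlim : ∀ n x, 0 < x → Tendsto (fun k => J k n x) l (nhds (K n x))) :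
    CompletelyMonotonic (fun x => - K 1 x / K 0 x) := by
  refine ⟨fun x hx => quot_smooth K hK hKp x hx, fun n x hx => ?_⟩
  have key : ∀ n, Tendsto (fun k => iteratedDeriv n (fun x => - J k 1 x / J k 0 x) x) l
      (nhds (iteratedDeriv n (fun x => - K 1 x / K 0 x) x)) := by
    intro n
    induction n using Nat.strong_induction_on with
    | _ n ih =>
      rw [quot_rec K hK hKp n x hx]
      have : Tendsto (fun k => (- J k (n+1) x - ∑ i ∈ Finset.range n, n.choose (i+1) * J k (i+1) x * iteratedDeriv (n - (i+1)) (fun x => - J k 1 x / J k 0 x) x) / J k 0 x) l (nhds ((- K (n+1) x - ∑ i ∈ Finset.range n, n.choose (i+1) * K (i+1) x * iteratedDeriv (n - (i+1)) (fun x => - K 1 x / K 0 x) x) / K 0 x)) := by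
        refine Tendsto.div (Tendsto.sub (hlim _ x hx).neg (tendsto_finsetSum _ fun i hi => ?_)) (hlim 0 x hx) (hKp x hx).ne'
        refine Tendsto.mul (Tendsto.mul tendsto_const_nhds (hlim _ x hx)) (ih _ ?_)
        have := Finset.mem_range.1 hi
        omega
      refine this.congr' ?_
      filter_upwards [hJ] with k hk
      rw [quot_rec (J k) hk.1 hk.2.1 n x hx]
  refine ge_of_tendsto ((key n).const_mul _) ?_
  filter_upwards [hJ] with k hk using hk.2.2.2 n x hx


lemma root_sum_le {ι : Type*} [Fintype ι] [Nonempty ι] (t a : ι → ℝ) (ht : ∀ i, 0 < t i) (ha : ∀ i, 0 < a i) (c : ℝ)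
    (S : Finset ℂ) (hne : ∀ z ∈ S, ∀ i, z + t i ≠ 0)
    (hc : ∀ z ∈ S, ∀ w ∈ S, z ≠ (starRingEnd ℂ) w)
    (hr : ∀ z ∈ S, ∑ i, (a i : ℂ) / (z + t i) ^ 2 = - (c : ℂ)) (n : ℕ) (x : ℝ) (hx : 0 < x) :
    (∀ z ∈ S, z.re < 0) ∧
    ∑ z ∈ S, (((x - z) ^ (n+1))⁻¹).re ≤ ∑ i, ((x + t i) ^ (n+1))⁻¹ := by
  let e := S.equivFin
  let ζ : Fin S.card → ℂ := fun j => (e.symm j : ℂ)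
  have hmem : ∀ j, ζ j ∈ S := fun j => (e.symm j).2
  obtain ⟨w, w0, w1, w2, w3⟩ := core t a ha c ζ (fun i j hij => e.symm.injective (Subtype.ext hij))
    (fun j => hne _ (hmem j)) (fun i j => hc _ (hmem i) _ (hmem j)) (fun j => hr _ (hmem j))
  have hneg : ∀ j, (ζ j).re < 0 := by
    intro j
    have : 0 < ∑ i, w j i * t i := by
      obtain ⟨i, hi⟩ : ∃ i, 0 < w j i := by
        by_contra hcon
        push Not at hcon
        have : ∑ i, w j i ≤ 0 := Finset.sum_nonpos fun i _ => hcon i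
        linarith [w1 j]
      exact Finset.sum_pos' (fun i _ => mul_nonneg (w0 j i) (ht i).le) ⟨i, Finset.mem_univ _, mul_pos hi (ht i)⟩
    linarith [w3 j]
  constructor
  · intro z hz
    have := hneg (e ⟨z, hz⟩)
    simpa [ζ] using this
  have hsum : ∑ z ∈ S, (((x - z) ^ (n+1))⁻¹).re = ∑ j, (((x - ζ j) ^ (n+1))⁻¹).re := by
    rw [← Finset.sum_coe_sort S]
    exact (Equiv.sum_comp e.symm (fun z : S => (((x - (z:ℂ)) ^ (n+1))⁻¹).re)).symm
  rw [hsum]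
  have hj : ∀ j, (((x - ζ j) ^ (n+1))⁻¹).re ≤ ∑ i, w j i * ((x + t i) ^ (n+1))⁻¹ := by
    intro j
    have h1 : 0 < x - (ζ j).re := by linarith [hneg j]
    have h2 : x - (ζ j).re ≤ ‖(x : ℂ) - ζ j‖ := by
      have := Complex.re_le_norm ((x : ℂ) - ζ j)
      simpa using this
    have h3 : (((x - ζ j) ^ (n+1))⁻¹).re ≤ ((x - (ζ j).re) ^ (n+1))⁻¹ := by
      refine (Complex.re_le_norm _).trans ?_
      rw [norm_inv, norm_pow]
      gcongr
    refine h3.trans ?_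
    have hconv : ConvexOn ℝ (Ioi (0:ℝ)) (fun y : ℝ => y ^ (-(n+1 : ℕ) : ℤ)) := convexOn_zpow _
    have := hconv.map_sum_le (t := Finset.univ) (w := w j) (p := fun i => x + t i) (fun i _ => w0 j i) (w1 j)
      (fun i _ => add_pos hx (ht i))
    simp only [smul_eq_mul, zpow_neg, zpow_natCast] at this
    have e1 : ∑ i, w j i * (x + t i) = x - (ζ j).re := by
      simp only [mul_add, Finset.sum_add_distrib, ← Finset.sum_mul, w1, w3]; ring
    rwa [e1] at this
  calc _ ≤ ∑ j, ∑ i, w j i * ((x + t i) ^ (n+1))⁻¹ := Finset.sum_le_sum fun j _ => hj j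
    _ = ∑ i, (∑ j, w j i) * ((x + t i) ^ (n+1))⁻¹ := by
      rw [Finset.sum_comm]; simp only [Finset.sum_mul]
    _ ≤ _ := by
      refine Finset.sum_le_sum fun i _ => ?_
      have : 0 ≤ ((x + t i) ^ (n+1))⁻¹ := by have := ht i; positivity
      nlinarith [w2 i]

section poly
open Polynomial

noncomputable def polyM {ι : Type*} [Fintype ι] (t : ι → ℝ) : ℂ[X] := ∏ i, (X + C (t i : ℂ)) ^ 2

noncomputable def polyN {ι : Type*} [Fintype ι] [DecidableEq ι] (t a : ι → ℝ) : ℂ[X] :=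
  ∑ i, C (a i : ℂ) * ∏ k ∈ Finset.univ.erase i, (X + C (t k : ℂ)) ^ 2

variable {ι : Type*} [Fintype ι] [DecidableEq ι] (t a : ι → ℝ)

lemma polyM_eval (z : ℂ) : (polyM t).eval z = ∏ i, (z + t i) ^ 2 := by
  simp [polyM, eval_prod]

lemma polyN_eval (z : ℂ) (hz : ∀ i, z + t i ≠ 0) :
    (polyN t a).eval z = (∑ i, (a i : ℂ) / (z + t i) ^ 2) * (polyM t).eval z := by
  rw [polyM_eval, polyN, eval_finset_sum, Finset.sum_mul]
  refine Finset.sum_congr rfl fun i _ => ?_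
  rw [← Finset.mul_prod_erase Finset.univ _ (Finset.mem_univ i)]
  have := hz i
  simp [eval_prod]
  field_simp

lemma polyN_ne (ht : Function.Injective t) (ha : ∀ i, 0 < a i) (i : ι) (z : ℂ) (hz : z + t i = 0) :
    (polyN t a).eval z ≠ 0 := by
  have hz' : z = - (t i : ℂ) := eq_neg_of_add_eq_zero_left hz
  rw [polyN, eval_finset_sum, Finset.sum_eq_single i]
  · simp only [eval_mul, eval_C, eval_prod, eval_pow, eval_add, eval_X]
    refine mul_ne_zero (by exact_mod_cast (ha i).ne') (Finset.prod_ne_zero_iff.2 fun k hk => pow_ne_zero 2 ?_)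
    have hk' : k ≠ i := Finset.ne_of_mem_erase hk
    rw [hz']
    intro h0
    have : (t k : ℂ) = t i := by linear_combination h0
    exact hk' (ht (by exact_mod_cast this))
  · intro k _ hk
    simp only [eval_mul, eval_C, eval_prod, eval_pow, eval_add, eval_X]
    rw [Finset.prod_eq_zero (i := i) (by simp [hk.symm])] <;> simp [hz]
  · simp

lemma sum_hasDeriv (z : ℂ) (hz : ∀ i, z + t i ≠ 0) :
    HasDerivAt (fun z : ℂ => ∑ i, (a i : ℂ) / (z + t i) ^ 2) (- ∑ i, 2 * (a i : ℂ) / (z + t i) ^ 3) z := by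
  rw [← Finset.sum_neg_distrib]
  refine HasDerivAt.fun_sum fun i _ => ?_
  have h1 : HasDerivAt (fun z : ℂ => (z + t i) ^ 2) (2 * (z + t i)) z := by
    have := ((hasDerivAt_id z).add_const (t i : ℂ)).fun_pow 2
    simpa using this
  have := (hasDerivAt_const z (a i : ℂ)).fun_div h1 (pow_ne_zero 2 (hz i))
  refine this.congr_deriv ?_
  have := hz i
  field_simp
  ring

lemma polyN_deriv (z : ℂ) (hz : ∀ i, z + t i ≠ 0) :
    (derivative (polyN t a)).eval z = (- ∑ i, 2 * (a i : ℂ) / (z + t i) ^ 3) * (polyM t).eval z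
      + (∑ i, (a i : ℂ) / (z + t i) ^ 2) * (derivative (polyM t)).eval z := by
  have h1 := (sum_hasDeriv t a z hz).mul ((polyM t).hasDerivAt z)
  have h2 := (polyN t a).hasDerivAt z
  have he : (fun y => (polyN t a).eval y) =ᶠ[nhds z] (fun z : ℂ => ∑ i, (a i : ℂ) / (z + t i) ^ 2) * (fun y => (polyM t).eval y) := by
    have : ∀ᶠ y in nhds z, ∀ i, y + (t i : ℂ) ≠ 0 := by
      rw [eventually_all]
      intro i
      exact (by fun_prop : ContinuousAt (fun y : ℂ => y + (t i : ℂ)) z).eventually_ne (hz i)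
    filter_upwards [this] with y hy
    simpa using polyN_eval t a y hy
  exact h2.unique (h1.congr_of_eventuallyEq he)

lemma polyM_logderiv (z : ℂ) (hz : ∀ i, z + t i ≠ 0) :
    (derivative (polyM t)).eval z / (polyM t).eval z = ∑ i, 2 / (z + t i) := by
  have h : logDeriv (fun z : ℂ => ∏ i, (z + t i) ^ 2) z = ∑ i, 2 / (z + t i) := by
    rw [logDeriv_prod (f := fun i (z : ℂ) => (z + t i) ^ 2) (fun i _ => pow_ne_zero 2 (hz i)) (fun i _ => by fun_prop)]
    refine Finset.sum_congr rfl fun i _ => ?_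
    rw [logDeriv_fun_pow (by fun_prop)]
    simp [logDeriv_apply, div_eq_mul_inv]
  rw [← h, logDeriv_apply]
  have : (fun z : ℂ => ∏ i, (z + (t i : ℂ)) ^ 2) = fun z => (polyM t).eval z := by
    funext z; rw [polyM_eval]
  rw [this, Polynomial.deriv, polyM_eval]

/-- For all but finitely many `c` the polynomial `cM+N` has only simple roots. -/
lemma good_c [Nonempty ι] (ht0 : ∀ i, 0 < t i) (ht : Function.Injective t) (ha : ∀ i, 0 < a i) :
    ∃ B : Finset ℂ, ∀ c : ℝ, (c : ℂ) ∉ B → ∀ z, (C (c:ℂ) * polyM t + polyN t a).eval z = 0 →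
      (derivative (C (c:ℂ) * polyM t + polyN t a)).eval z ≠ 0 := by
  let D : ℂ[X] := polyN t a * derivative (polyM t) - derivative (polyN t a) * polyM t
  have hD : D ≠ 0 := by
    intro h0
    have h1 : D.eval 1 = 0 := by rw [h0]; simp
    have hz : ∀ i, (1:ℂ) + t i ≠ 0 := by
      intro i
      have : (1 + t i) ≠ 0 := by linarith [ht0 i]
      exact_mod_cast this
    have hM : (polyM t).eval 1 ≠ 0 := by
      rw [polyM_eval]; exact Finset.prod_ne_zero_iff.2 fun i _ => pow_ne_zero 2 (hz i)
    simp only [D, eval_sub, eval_mul, polyN_eval t a 1 hz, polyN_deriv t a 1 hz] at h1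
    have h2 : (∑ i, 2 * (a i : ℂ) / (1 + t i) ^ 3) * (eval 1 (polyM t)) ^ 2 = 0 := by
      linear_combination h1
    rcases mul_eq_zero.1 h2 with h3 | h3
    · have h4 : (∑ i, 2 * (a i) / (1 + t i) ^ 3) = 0 := by exact_mod_cast h3
      have h5 : 0 < (∑ i, 2 * (a i) / (1 + t i) ^ 3) := Finset.sum_pos (fun i _ => by
        have := ht0 i; have := ha i; positivity) Finset.univ_nonempty
      linarith
    · exact hM (pow_eq_zero_iff (two_ne_zero) |>.1 h3)
  refine ⟨D.roots.toFinset.image (fun z => - (polyN t a).eval z / (polyM t).eval z), fun c hc z h1 h2 => hc ?_⟩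
  simp only [eval_add, eval_mul, eval_C, derivative_add, derivative_mul, derivative_C, zero_mul, zero_add] at h1 h2
  have hM : (polyM t).eval z ≠ 0 := by
    intro h0
    have h0' := h0
    rw [polyM_eval] at h0
    obtain ⟨i, _, hi⟩ := Finset.prod_eq_zero_iff.1 h0
    have := polyN_ne t a ht ha i z (pow_eq_zero_iff (two_ne_zero) |>.1 hi)
    rw [h0'] at h1
    simp at h1
    exact this h1
  rw [Finset.mem_image]
  refine ⟨z, ?_, ?_⟩
  · rw [Multiset.mem_toFinset, mem_roots hD, IsRoot.def]
    simp only [D, eval_sub, eval_mul]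
    linear_combination (derivative (polyM t)).eval z * h1 - (polyM t).eval z * h2
  · field_simp
    linear_combination -h1

end poly


/-- derivatives of `∑ aᵢ/(x+tᵢ)^2 + c` -/
noncomputable def DS {ι : Type*} [Fintype ι] (t a : ι → ℝ) (c : ℝ) (n : ℕ) (x : ℝ) : ℝ :=
  (-1)^n * (n+1).factorial * ∑ i, a i * ((x + t i) ^ (n+2))⁻¹ + if n = 0 then c else 0

lemma inv_pow_deriv (s : ℝ) (n : ℕ) (x : ℝ) (hx : x + s ≠ 0) :
    HasDerivAt (fun x : ℝ => ((x + s) ^ n)⁻¹) (- n * ((x + s) ^ (n+1))⁻¹) x := by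
  have h1 : HasDerivAt (fun x : ℝ => (x + s) ^ n) (n * (x + s)^(n-1)) x := by
    have := ((hasDerivAt_id x).add_const s).fun_pow n
    simpa using this
  have := h1.fun_inv (pow_ne_zero n hx)
  refine this.congr_deriv (Eq.symm ?_)
  rcases n with _ | n
  · simp
  · simp only [Nat.add_sub_cancel]; field_simp; ring

lemma DS_deriv {ι : Type*} [Fintype ι] (t a : ι → ℝ) (ht : ∀ i, 0 < t i) (c : ℝ) (n : ℕ) (x : ℝ) (hx : 0 < x) :
    HasDerivAt (DS t a c n) (DS t a c (n+1) x) x := by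
  unfold DS
  have h1 : HasDerivAt (fun x => ∑ i, a i * ((x + t i) ^ (n+2))⁻¹) (∑ i, a i * (- (n+2 : ℕ) * ((x + t i) ^ (n+2+1))⁻¹)) x :=
    HasDerivAt.fun_sum fun i _ => (inv_pow_deriv (t i) (n+2) x (by linarith [ht i])).const_mul _
  have := (h1.const_mul ((-1)^n * ((n+1).factorial : ℝ))).add_const (if n = 0 then c else 0)
  refine this.congr_deriv (Eq.symm ?_)
  rw [Nat.factorial_succ (n+1)]
  simp only [Nat.add_eq_zero_iff, one_ne_zero, and_false, if_false, add_zero, Finset.mul_sum]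
  refine Finset.sum_congr rfl fun i _ => ?_
  push_cast
  ring

lemma DS_pos {ι : Type*} [Fintype ι] [Nonempty ι] (t a : ι → ℝ) (ht : ∀ i, 0 < t i) (ha : ∀ i, 0 < a i) (c : ℝ) (hc : 0 ≤ c) (x : ℝ) (hx : 0 < x) :
    0 < DS t a c 0 x := by
  have h5 : 0 < (∑ i, a i * ((x + t i) ^ 2)⁻¹) := Finset.sum_pos (fun i _ => by
        have := ht i; have := ha i; positivity) Finset.univ_nonempty
  simp [DS]
  linarith

lemma re_inv_pow_deriv (z : ℂ) (n : ℕ) (x : ℝ) (hx : (x:ℂ) - z ≠ 0) :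
    HasDerivAt (fun x : ℝ => (((x - z : ℂ) ^ n)⁻¹).re) (- n * (((x - z : ℂ) ^ (n+1))⁻¹).re) x := by
  have h1 : HasDerivAt (fun x : ℂ => (x - z) ^ n) (n * (x - z)^(n-1)) x := by
    have := ((hasDerivAt_id (x:ℂ)).sub_const z).fun_pow n
    simpa using this
  have h2 := h1.fun_inv (pow_ne_zero n hx)
  have := h2.real_of_complex
  refine this.congr_deriv (Eq.symm ?_)
  have : - (n * ((x:ℂ) - z)^(n-1)) / (((x:ℂ)-z)^n)^2 = ((-n : ℝ) : ℂ) * (((x - z : ℂ) ^ (n+1))⁻¹) := by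
    rcases n with _ | n
    · simp
    · simp only [Nat.add_sub_cancel]; push_cast; field_simp; ring
  rw [this, Complex.re_ofReal_mul]

open Polynomial in
lemma discrete_c {ι : Type*} [Fintype ι] [DecidableEq ι] [Nonempty ι] (t a : ι → ℝ) (ht0 : ∀ i, 0 < t i)
    (ht : Function.Injective t) (ha : ∀ i, 0 < a i) (c : ℝ) (hc : 0 < c)
    (hgood : ∀ z, (C (c:ℂ) * polyM t + polyN t a).eval z = 0 →
      (derivative (C (c:ℂ) * polyM t + polyN t a)).eval z ≠ 0) :
    CompletelyMonotonic (fun x => - DS t a c 1 x / DS t a c 0 x) := by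
  set p := C (c:ℂ) * polyM t + polyN t a with hp
  -- positivity at positive reals
  have hzx : ∀ x : ℝ, 0 < x → ∀ i, (x:ℂ) + t i ≠ 0 := by
    intro x hx i
    have : (x + t i) ≠ 0 := by linarith [ht0 i]
    exact_mod_cast this
  have hpe : ∀ z : ℂ, (∀ i, z + t i ≠ 0) → p.eval z = (∑ i, (a i : ℂ) / (z + t i) ^ 2 + c) * (polyM t).eval z := by
    intro z hz
    rw [hp, eval_add, eval_mul, eval_C, polyN_eval t a z hz]; ring
  have hMne : ∀ z : ℂ, (∀ i, z + t i ≠ 0) → (polyM t).eval z ≠ 0 := by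
    intro z hz
    rw [polyM_eval]; exact Finset.prod_ne_zero_iff.2 fun i _ => pow_ne_zero 2 (hz i)
  have hFx : ∀ x : ℝ, 0 < x → (∑ i, (a i : ℂ) / (x + t i) ^ 2 + c) = (DS t a c 0 x : ℂ) := by
    intro x hx
    simp [DS, div_eq_mul_inv]
  have hpx : ∀ x : ℝ, 0 < x → p.eval (x:ℂ) ≠ 0 := by
    intro x hx
    rw [hpe _ (hzx x hx), hFx x hx]
    refine mul_ne_zero ?_ (hMne _ (hzx x hx))
    exact_mod_cast (DS_pos t a ht0 ha c hc.le x hx).ne'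
  have hp0 : p ≠ 0 := by
    intro h0
    exact hpx 1 one_pos (by rw [h0]; simp)
  -- roots
  have hroot1 : ∀ z, p.eval z = 0 → ∀ i, z + t i ≠ 0 := by
    intro z hz i hi
    have h1 := polyN_ne t a ht ha i z hi
    have h2 : (polyM t).eval z = 0 := by
      rw [polyM_eval]; exact Finset.prod_eq_zero (Finset.mem_univ i) (by rw [hi]; simp)
    rw [hp, eval_add, eval_mul, h2, mul_zero, zero_add] at hz
    exact h1 hz
  have hroot2 : ∀ z, p.eval z = 0 → ∑ i, (a i : ℂ) / (z + t i) ^ 2 = - (c : ℂ) := by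
    intro z hz
    have h1 := hroot1 z hz
    rw [hpe z h1] at hz
    rcases mul_eq_zero.1 hz with h | h
    · exact eq_neg_of_add_eq_zero_left h
    · exact absurd h (hMne z h1)
  have hroot3 : ∀ z, p.eval z = 0 → z.im ≠ 0 := by
    intro z hz him
    have h2 := hroot2 z hz
    have hzr : z = (z.re : ℂ) := by apply Complex.ext <;> simp [him]
    rw [hzr] at h2
    have h3 : ∑ i, (a i) / (z.re + t i) ^ 2 = - c := by exact_mod_cast h2
    have h4 : 0 ≤ ∑ i, (a i) / (z.re + t i) ^ 2 := Finset.sum_nonneg fun i _ => by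
      have := ha i; positivity
    linarith
  have hnd : p.roots.Nodup := by
    rw [Multiset.nodup_iff_count_le_one]
    intro z
    rw [count_roots]
    by_contra hcon
    push Not at hcon
    rw [one_lt_rootMultiplicity_iff_isRoot hp0] at hcon
    exact hgood z hcon.1 hcon.2
  let R := p.roots.toFinset
  have hR : ∀ z ∈ R, p.eval z = 0 := by
    intro z hz
    have := Multiset.mem_toFinset.1 hz
    exact (mem_roots hp0).1 this
  let K : ℕ → ℝ → ℝ := fun n x => (-1)^n * n.factorial * (∑ i, 2 * ((x + t i) ^ (n+1))⁻¹ - ∑ z ∈ R, (((x - z : ℂ) ^ (n+1))⁻¹).re)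
  have hxz : ∀ x : ℝ, 0 < x → ∀ z ∈ R, (x:ℂ) - z ≠ 0 := by
    intro x hx z hz h0
    have : z = x := (sub_eq_zero.1 h0).symm
    exact hpx x hx (this ▸ hR z hz)
  apply cm_of_chain K
  · intro n x hx
    have h1 : HasDerivAt (fun x => ∑ i, 2 * ((x + t i) ^ (n+1))⁻¹) (∑ i, 2 * (- (n+1 : ℕ) * ((x + t i) ^ (n+1+1))⁻¹)) x :=
      HasDerivAt.fun_sum fun i _ => (inv_pow_deriv (t i) (n+1) x (by linarith [ht0 i])).const_mul _
    have h2 : HasDerivAt (fun x : ℝ => ∑ z ∈ R, (((x - z : ℂ) ^ (n+1))⁻¹).re) (∑ z ∈ R, (- (n+1 : ℕ) * (((x - z : ℂ) ^ (n+1+1))⁻¹).re)) x :=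
      HasDerivAt.fun_sum fun z hz => (re_inv_pow_deriv z (n+1) x (hxz x hx z hz))
    have := (h1.fun_sub h2).const_mul ((-1)^n * (n.factorial : ℝ))
    refine this.congr_deriv (Eq.symm ?_)
    simp only [K]
    rw [Nat.factorial_succ, ← Finset.mul_sum, ← Finset.mul_sum, ← Finset.mul_sum, ← Finset.mul_sum]
    push_cast
    ring
  · intro n x hx
    have e : (-1:ℝ)^n * K n x = n.factorial * (∑ i, 2 * ((x + t i) ^ (n+1))⁻¹ - ∑ z ∈ R, (((x - z : ℂ) ^ (n+1))⁻¹).re) := by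
      simp only [K, ← mul_assoc, ← mul_pow]; norm_num
    rw [e]
    refine mul_nonneg (by positivity) ?_
    have u1 := (root_sum_le t a ht0 ha c (R.filter fun z => 0 < z.im)
      (fun z hz => hroot1 z (hR z (Finset.mem_filter.1 hz).1))
      (fun z hz w hw h => by
        have h1 := (Finset.mem_filter.1 hz).2
        have h2 := (Finset.mem_filter.1 hw).2
        rw [h] at h1; simp at h1; linarith)
      (fun z hz => hroot2 z (hR z (Finset.mem_filter.1 hz).1)) n x hx).2
    have u2 := (root_sum_le t a ht0 ha c (R.filter fun z => ¬ 0 < z.im)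
      (fun z hz => hroot1 z (hR z (Finset.mem_filter.1 hz).1))
      (fun z hz w hw h => by
        have h1 := (Finset.mem_filter.1 hz).2
        have h2 := (Finset.mem_filter.1 hw).2
        have h3 := hroot3 w (hR w (Finset.mem_filter.1 hw).1)
        rw [h] at h1; simp at h1 h2
        exact h3 (le_antisymm h2 h1))
      (fun z hz => hroot2 z (hR z (Finset.mem_filter.1 hz).1)) n x hx).2
    rw [← Finset.sum_filter_add_sum_filter_not R (fun z => 0 < z.im), ← Finset.mul_sum]
    linarith
  · intro x hx
    have h1 := (IsAlgClosed.splits p).eval_derivative_div_eval_of_ne_zero (hpx x hx)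
    have h2 : (p.roots.map fun z ↦ 1 / ((x:ℂ) - z)).sum = ∑ z ∈ R, 1 / ((x:ℂ) - z) := by
      rw [Finset.sum, Multiset.toFinset_val, Multiset.dedup_eq_self.2 hnd]
    rw [h2] at h1
    have hF := hFx x hx
    have hD : (derivative p).eval (x:ℂ) = (DS t a c 1 x : ℂ) * (polyM t).eval (x:ℂ) + (DS t a c 0 x : ℂ) * (derivative (polyM t)).eval (x:ℂ) := by
      have : (- ∑ i, 2 * (a i : ℂ) / (x + t i) ^ 3) = (DS t a c 1 x : ℂ) := by
        simp [DS, div_eq_mul_inv, Finset.mul_sum, mul_assoc]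
      rw [hp, derivative_add, derivative_mul, derivative_C, zero_mul, zero_add, eval_add, eval_mul, eval_C,
        polyN_deriv t a x (hzx x hx), this, ← hF]
      ring
    have hM := hMne x (hzx x hx)
    have hD0 : (DS t a c 0 x : ℂ) ≠ 0 := by exact_mod_cast (DS_pos t a ht0 ha c hc.le x hx).ne'
    rw [hD, hpe _ (hzx x hx), hF] at h1
    have h3 : (DS t a c 1 x : ℂ) / DS t a c 0 x + (derivative (polyM t)).eval (x:ℂ) / (polyM t).eval (x:ℂ) = ∑ z ∈ R, 1 / ((x:ℂ) - z) := by
      rw [← h1]; field_simp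
    rw [polyM_logderiv t x (hzx x hx)] at h3
    have h4 : ((- DS t a c 1 x / DS t a c 0 x : ℝ) : ℂ) = ∑ i, 2 / ((x:ℂ) + t i) - ∑ z ∈ R, 1 / ((x:ℂ) - z) := by
      rw [← h3]; push_cast; ring
    have h5 := congrArg Complex.re h4
    rw [Complex.ofReal_re] at h5
    rw [h5, Complex.sub_re, Complex.re_sum, Complex.re_sum]
    have h6 : ∀ i, (2 / ((x:ℂ) + t i)).re = 2 * (x + t i)⁻¹ := by
      intro i
      have : (2 / ((x:ℂ) + t i)) = ((2 * (x + t i)⁻¹ : ℝ) : ℂ) := by push_cast; rw [div_eq_mul_inv]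
      rw [this, Complex.ofReal_re]
    simp [K, h6]

lemma discrete {ι : Type*} [Fintype ι] [Nonempty ι] (t a : ι → ℝ) (ht0 : ∀ i, 0 < t i)
    (ht : Function.Injective t) (ha : ∀ i, 0 < a i) :
    CompletelyMonotonic (fun x => - DS t a 0 1 x / DS t a 0 0 x) := by
  classical
  obtain ⟨B, hB⟩ := good_c t a ht0 ht ha
  have hfin : (Set.preimage (fun c : ℝ => (c : ℂ)) (B : Set ℂ)).Finite := B.finite_toSet.preimage (Complex.ofReal_injective.injOn)
  have hev : ∀ᶠ c : ℝ in nhdsWithin 0 (Ioi 0), c ∉ (Set.preimage (fun c : ℝ => (c : ℂ)) (B : Set ℂ)) := by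
    have h1 : ∀ᶠ c : ℝ in nhdsWithin 0 {0}ᶜ, c ∉ (Set.preimage (fun c : ℝ => (c : ℂ)) (B : Set ℂ)) :=
      nhdsNE_le_cofinite 0 (hfin.compl_mem_cofinite)
    exact h1.filter_mono (nhdsWithin_mono _ (fun y hy => (ne_of_gt hy)))
  refine quot_limit (l := nhdsWithin (0:ℝ) (Ioi 0)) (fun c => DS t a c) (DS t a 0) ?_ (DS_deriv t a ht0 0) (DS_pos t a ht0 ha 0 le_rfl) ?_
  · filter_upwards [hev, self_mem_nhdsWithin] with c hc hc0
    exact ⟨DS_deriv t a ht0 c, DS_pos t a ht0 ha c (le_of_lt hc0), discrete_c t a ht0 ht ha c hc0 (hB c (by simpa using hc))⟩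
  · intro n x hx
    unfold DS
    refine tendsto_const_nhds.add ?_
    split_ifs
    · exact tendsto_nhdsWithin_of_tendsto_nhds tendsto_id
    · exact tendsto_const_nhds


/-- derivatives of the Stieltjes integral with density `h` -/
noncomputable def SI (h : ℝ → ℝ) (n : ℕ) (x : ℝ) : ℝ :=
  (-1)^n * (n+1).factorial * ∫ t in Ioi (0:ℝ), h t * ((x + t) ^ (n+2))⁻¹

lemma ipow_int (x : ℝ) (hx : 0 < x) (n : ℕ) :
    Integrable (fun t : ℝ => ((x + t) ^ (n+2))⁻¹) (volume.restrict (Ioi 0)) := by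
  have h := integrableOn_add_rpow_Ioi_of_lt (a := -((n:ℝ)+2)) (c := 0) (m := x) (by
    have : (0:ℝ) ≤ n := by positivity
    linarith) (by linarith)
  refine (integrableOn_congr_fun (fun t ht => ?_) measurableSet_Ioi).1 h
  have ht' : (0:ℝ) < t := ht
  rw [Real.rpow_neg (by linarith), add_comm t x]
  congr 1
  have := Real.rpow_natCast (x+t) (n+2)
  push_cast at this
  exact this

lemma h_ipow_int (h : ℝ → ℝ) (hm : Measurable h) (h0 : ∀ t, 0 ≤ h t) (C : ℝ) (hC : ∀ t, h t ≤ C)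
    (x : ℝ) (hx : 0 < x) (n : ℕ) :
    Integrable (fun t : ℝ => h t * ((x + t) ^ (n+2))⁻¹) (volume.restrict (Ioi 0)) := by
  refine (ipow_int x hx n).bdd_mul (c := C) hm.aestronglyMeasurable ?_
  filter_upwards with t
  rw [Real.norm_eq_abs, abs_of_nonneg (h0 t)]
  exact hC t

lemma SI_deriv (h : ℝ → ℝ) (hm : Measurable h) (h0 : ∀ t, 0 ≤ h t) (C : ℝ) (hC : ∀ t, h t ≤ C)
    (n : ℕ) (x : ℝ) (hx : 0 < x) : HasDerivAt (SI h n) (SI h (n+1) x) x := by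
  have key := hasDerivAt_integral_of_dominated_loc_of_deriv_le (μ := volume.restrict (Ioi (0:ℝ)))
    (F := fun (x t : ℝ) => h t * ((x + t) ^ (n+2))⁻¹)
    (F' := fun (x t : ℝ) => h t * (- ((n+2 : ℕ) : ℝ) * ((x + t) ^ (n+2+1))⁻¹))
    (bound := fun t => (C * (n+2:ℕ)) * ((x/2 + t) ^ (n+1+2))⁻¹) (x₀ := x) (s := Ioi (x/2))
    (Ioi_mem_nhds (by linarith))
    (by
      filter_upwards with y
      exact (by fun_prop : Measurable fun t : ℝ => h t * ((y + t) ^ (n+2))⁻¹).aestronglyMeasurable)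
    (h_ipow_int h hm h0 C hC x hx n)
    (by
      exact (by fun_prop : Measurable fun t : ℝ => h t * (- ((n+2 : ℕ) : ℝ) * ((x + t) ^ (n+2+1))⁻¹)).aestronglyMeasurable)
    (by
      filter_upwards [ae_restrict_mem measurableSet_Ioi] with t ht y hy
      have ht' : (0:ℝ) < t := ht
      have hy' : x/2 < y := hy
      have hyt : 0 < y + t := by linarith
      rw [norm_mul, norm_mul, norm_neg, Real.norm_eq_abs, abs_of_nonneg (h0 t), Real.norm_eq_abs, Real.norm_eq_abs,
        abs_of_nonneg (by positivity), abs_of_nonneg (by positivity), ← mul_assoc]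
      have := h0 t
      gcongr
      · exact mul_nonneg (this.trans (hC t)) (by positivity)
      · exact hC t
      )
    ((ipow_int (x/2) (by linarith) (n+1)).const_mul _)
    (by
      filter_upwards [ae_restrict_mem measurableSet_Ioi] with t ht y hy
      have ht' : (0:ℝ) < t := ht
      have hy' : x/2 < y := hy
      exact (inv_pow_deriv t (n+2) y (by linarith)).const_mul _)
  refine (key.2.const_mul ((-1)^n * ((n+1).factorial : ℝ))).congr_deriv ?_
  unfold SI
  have : ∀ t : ℝ, h t * (- ((n+2 : ℕ) : ℝ) * ((x + t) ^ (n+2+1))⁻¹) = (- ((n+2 : ℕ) : ℝ)) * (h t * ((x + t) ^ (n+1+2))⁻¹) := by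
    intro t; ring
  simp only [this]
  rw [integral_const_mul, Nat.factorial_succ (n+1)]
  push_cast
  ring

lemma step_int (φ : ℝ → ℝ) (N : ℕ) (hN : 0 < N) :
    ∫ t in (0:ℝ)..N, φ (⌈t * N⌉₊ / N) = ∑ i ∈ Finset.range (N*N), φ (((i:ℝ)+1)/N) * (1/N) := by
  have hN' : (0:ℝ) < N := by exact_mod_cast hN
  have hval : ∀ k : ℕ, ∀ t ∈ Ioc ((k:ℝ)/N) (((k+1:ℕ):ℝ)/N), φ (⌈t * N⌉₊ / N) = φ (((k:ℝ)+1)/N) := by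
    intro k t ht
    have h1 := (div_lt_iff₀ hN').1 ht.1
    have h2 := (le_div_iff₀ hN').1 ht.2
    have : ⌈t * N⌉₊ = k + 1 := by
      rw [Nat.ceil_eq_iff (by omega)]
      exact ⟨by simpa using h1, h2⟩
    rw [this]; push_cast; rfl
  have hle : ∀ k : ℕ, (k:ℝ)/N ≤ ((k+1:ℕ):ℝ)/N := by
    intro k; gcongr; omega
  have h := intervalIntegral.sum_integral_adjacent_intervals (f := fun t : ℝ => φ (⌈t * N⌉₊ / N)) (μ := volume)
    (a := fun k : ℕ => (k:ℝ)/N) (n := N*N) (by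
      intro k _
      rw [intervalIntegrable_iff_integrableOn_Ioc_of_le (hle k)]
      refine (integrableOn_congr_fun (hval k) measurableSet_Ioc).2 ?_
      exact integrableOn_const (by simp))
  have e : ((N*N : ℕ):ℝ)/N = N := by push_cast; field_simp
  simp only [e, Nat.cast_zero, zero_div] at h
  rw [← h]
  refine Finset.sum_congr rfl fun k _ => ?_
  rw [intervalIntegral.integral_of_le (hle k), setIntegral_congr_fun measurableSet_Ioc (hval k)]
  rw [setIntegral_const, smul_eq_mul, mul_comm]
  congr 1
  rw [Real.volume_real_Ioc_of_le (hle k)]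
  push_cast
  field_simp
  ring

lemma ceil_tendsto (t : ℝ) (ht : 0 < t) :
    Tendsto (fun N : ℕ => ((⌈t * (N+1:ℕ)⌉₊ : ℝ) / (N+1:ℕ))) atTop (nhdsWithin t (Ici t)) := by
  have hN : ∀ N : ℕ, (0:ℝ) < (N+1:ℕ) := fun N => by positivity
  have hge : ∀ N : ℕ, t ≤ ((⌈t * (N+1:ℕ)⌉₊ : ℝ) / (N+1:ℕ)) := by
    intro N
    rw [le_div_iff₀ (hN N)]
    exact Nat.le_ceil _
  refine tendsto_nhdsWithin_iff.2 ⟨?_, Eventually.of_forall hge⟩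
  have hup : ∀ N : ℕ, ((⌈t * (N+1:ℕ)⌉₊ : ℝ) / (N+1:ℕ)) ≤ t + 1/((N:ℝ)+1) := by
    intro N
    rw [div_le_iff₀ (hN N)]
    have h1 := (Nat.ceil_lt_add_one (a := t * (N+1:ℕ)) (by positivity)).le
    refine h1.trans (le_of_eq ?_)
    push_cast
    field_simp
  have hl : Tendsto (fun N : ℕ => t + 1/((N:ℝ)+1)) atTop (nhds t) := by
    simpa using tendsto_const_nhds.add (tendsto_one_div_add_atTop_nhds_zero_nat (𝕜 := ℝ))
  exact tendsto_of_tendsto_of_tendsto_of_le_of_le tendsto_const_nhds hl hge hup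

/-- Riemann sum data -/
noncomputable def rt (N : ℕ) (i : Fin ((N+1)*(N+1))) : ℝ := ((i:ℕ) + 1 : ℝ) / (N+1:ℕ)
/-- Riemann sum weights -/
noncomputable def ra (h : ℝ → ℝ) (N : ℕ) (i : Fin ((N+1)*(N+1))) : ℝ :=
  (h (rt N i) + 1/(N+1:ℕ)) * (1/(N+1:ℕ))

lemma riemann_lim (h : ℝ → ℝ) (h0 : ∀ t, 0 ≤ h t) (C : ℝ) (hC : ∀ t, h t ≤ C)
    (hr : ∀ t, 0 < t → ContinuousWithinAt h (Ici t) t)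
    (n : ℕ) (x : ℝ) (hx : 0 < x) :
    Tendsto (fun N => DS (rt N) (ra h N) 0 n x) atTop (nhds (SI h n x)) := by
  have hsum : ∀ N : ℕ, ∑ i, ra h N i * ((x + rt N i) ^ (n+2))⁻¹ =
      ∫ t in Ioi (0:ℝ), (Ioc (0:ℝ) (N+1:ℕ)).indicator (fun t => (h (⌈t * (N+1:ℕ)⌉₊ / (N+1:ℕ)) + 1/(N+1:ℕ)) * ((x + (⌈t * (N+1:ℕ)⌉₊ / (N+1:ℕ))) ^ (n+2))⁻¹) t := by
    intro N
    have h1 := step_int (fun s => (h s + 1/(N+1:ℕ)) * ((x + s) ^ (n+2))⁻¹) (N+1) (by omega)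
    rw [setIntegral_indicator measurableSet_Ioc, inter_eq_right.2 (fun t ht => ht.1), ← intervalIntegral.integral_of_le (by positivity), h1,
      Finset.sum_range]
    refine Finset.sum_congr rfl fun i _ => ?_
    simp only [ra, rt]
    ring
  unfold DS SI
  simp only [ite_self, add_zero, hsum]
  refine Tendsto.const_mul _ ?_
  refine tendsto_integral_filter_of_dominated_convergence (fun t => (C+1) * ((x + t) ^ (n+2))⁻¹) ?_ ?_ ((ipow_int x hx n).const_mul _) ?_
  · filter_upwards with N
    refine (Measurable.indicator ?_ measurableSet_Ioc).aestronglyMeasurable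
    exact (measurable_from_nat (f := fun k : ℕ => (h ((k:ℝ) / (N+1:ℕ)) + 1/(N+1:ℕ)) * ((x + ((k:ℝ) / (N+1:ℕ))) ^ (n+2))⁻¹)).comp
      (Nat.measurable_ceil.comp (by fun_prop : Measurable fun t : ℝ => t * (N+1:ℕ)))
  · filter_upwards with N
    filter_upwards [ae_restrict_mem measurableSet_Ioi] with t ht
    have ht' : (0:ℝ) < t := ht
    have hN : (0:ℝ) < (N+1:ℕ) := by positivity
    have hC0 : 0 ≤ C := (h0 0).trans (hC 0)
    refine (norm_indicator_le_norm_self _ _).trans ?_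
    have hge : t ≤ ((⌈t * (N+1:ℕ)⌉₊ : ℝ) / (N+1:ℕ)) := by
      rw [le_div_iff₀ hN]
      exact Nat.le_ceil _
    have h3 := h0 ((⌈t * (N+1:ℕ)⌉₊ : ℝ) / (N+1:ℕ))
    have h4 := hC ((⌈t * (N+1:ℕ)⌉₊ : ℝ) / (N+1:ℕ))
    have h5 : (1:ℝ)/(N+1:ℕ) ≤ 1 := by
      rw [div_le_one hN]; push_cast; linarith [show (0:ℝ) ≤ N by positivity]
    rw [Real.norm_eq_abs, abs_of_nonneg (by positivity)]
    gcongr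
  · filter_upwards [ae_restrict_mem measurableSet_Ioi] with t ht
    have ht' : (0:ℝ) < t := ht
    have hl := ceil_tendsto t ht'
    have hl' : Tendsto (fun N : ℕ => ((⌈t * (N+1:ℕ)⌉₊ : ℝ) / (N+1:ℕ))) atTop (nhds t) := hl.mono_right nhdsWithin_le_nhds
    have h1 : Tendsto (fun N : ℕ => h ((⌈t * (N+1:ℕ)⌉₊ : ℝ) / (N+1:ℕ))) atTop (nhds (h t)) := (hr t ht').tendsto.comp hl
    have h2 : Tendsto (fun N : ℕ => (1:ℝ)/(N+1:ℕ)) atTop (nhds 0) := by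
      simpa using tendsto_one_div_add_atTop_nhds_zero_nat (𝕜 := ℝ)
    have h3 : Tendsto (fun N : ℕ => ((x + ((⌈t * (N+1:ℕ)⌉₊ : ℝ) / (N+1:ℕ))) ^ (n+2))⁻¹) atTop (nhds (((x + t)^(n+2))⁻¹)) :=
      ((hl'.const_add x).pow (n+2)).inv₀ (by positivity)
    have h4 := (h1.add h2).mul h3
    rw [add_zero] at h4
    refine h4.congr' ?_
    obtain ⟨M, hM⟩ := exists_nat_ge t
    filter_upwards [eventually_ge_atTop M] with N hN
    rw [indicator_of_mem]
    refine ⟨ht', hM.trans ?_⟩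
    exact_mod_cast (by omega : M ≤ N+1)

lemma SI_cm (h : ℝ → ℝ) (hm : Measurable h) (h0 : ∀ t, 0 ≤ h t) (C : ℝ) (hC : ∀ t, h t ≤ C)
    (hr : ∀ t, 0 < t → ContinuousWithinAt h (Ici t) t) (hp : ∀ x, 0 < x → 0 < SI h 0 x) :
    CompletelyMonotonic (fun x => - SI h 1 x / SI h 0 x) := by
  refine quot_limit (l := atTop) (fun N : ℕ => DS (rt N) (ra h N) 0) (SI h) ?_ (SI_deriv h hm h0 C hC) hp
    (fun n x hx => riemann_lim h h0 C hC hr n x hx)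
  filter_upwards with N
  haveI : Nonempty (Fin ((N+1)*(N+1))) := ⟨⟨0, by positivity⟩⟩
  have ht : ∀ i, 0 < rt N i := fun i => by unfold rt; positivity
  have ha : ∀ i, 0 < ra h N i := fun i => by
    have := h0 (rt N i)
    unfold ra; positivity
  have hi : Function.Injective (rt N) := by
    intro i j hij
    unfold rt at hij
    have hN : ((N+1:ℕ):ℝ) ≠ 0 := by positivity
    rw [div_left_inj' hN] at hij
    have : ((i:ℕ):ℝ) = (j:ℕ) := by linarith
    exact Fin.ext (by exact_mod_cast this)
  exact ⟨DS_deriv _ _ ht 0, DS_pos _ _ ht ha 0 le_rfl, discrete _ _ ht hi ha⟩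

/-- transfer to a function -/
lemma lcm_of_SI (f h : ℝ → ℝ) (hm : Measurable h) (h0 : ∀ t, 0 ≤ h t) (C : ℝ) (hC : ∀ t, h t ≤ C)
    (hr : ∀ t, 0 < t → ContinuousWithinAt h (Ici t) t) (hf : ∀ x, 0 < x → f x = SI h 0 x)
    (hfp : ∀ x, 0 < x → 0 < f x) : LogCompletelyMonotonic f := by
  have he : ∀ x, 0 < x → f =ᶠ[nhds x] SI h 0 := fun x hx => by
    filter_upwards [lt_mem_nhds hx] with y hy using hf y hy
  have hD := SI_deriv h hm h0 C hC
  have hcm := SI_cm h hm h0 C hC hr (fun x hx => hf x hx ▸ hfp x hx)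
  refine ⟨hfp, fun x hx => (chain_smooth _ hD 0 x hx).congr_of_eventuallyEq (he x hx), ?_⟩
  have hq : ∀ x, 0 < x → (fun x => -deriv f x / f x) =ᶠ[nhds x] (fun x => - SI h 1 x / SI h 0 x) := fun x hx => by
    filter_upwards [lt_mem_nhds hx] with y hy
    rw [(he y hy).deriv_eq, (hD 0 y hy).deriv, hf y hy]
  exact ⟨fun x hx => (hcm.1 x hx).congr_of_eventuallyEq (hq x hx), fun n x hx => by
    rw [(hq x hx).iteratedDeriv_eq]; exact hcm.2 n x hx⟩

lemma stieltjes_of_SI (f h : ℝ → ℝ) (hm : Measurable h) (h0 : ∀ t, 0 ≤ h t) (C : ℝ) (hC : ∀ t, h t ≤ C)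
    (hf : ∀ x, 0 < x → f x = SI h 0 x) : IsGenStieltjes 2 f := by
  refine ⟨(volume.restrict (Ioi 0)).withDensity (fun t => ENNReal.ofReal (h t)), 0, le_rfl, ?_, fun x hx => ?_⟩
  · refine withDensity_absolutelyContinuous _ _ ?_
    rw [Measure.restrict_apply measurableSet_Iio]
    have : Iio (0:ℝ) ∩ Ioi 0 = ∅ := by ext y; simp; intro h; linarith
    rw [this]; simp
  · have hmm : Measurable (fun t => ENNReal.ofReal (h t)) := hm.ennreal_ofReal
    have hae : (fun t => h t * ((x + t) ^ (0+2))⁻¹) =ᵐ[volume.restrict (Ioi 0)] fun t => (ENNReal.ofReal (h t)).toReal • (x + t) ^ (-2:ℝ) := by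
      filter_upwards [ae_restrict_mem measurableSet_Ioi] with t ht
      have ht' : (0:ℝ) < t := ht
      rw [ENNReal.toReal_ofReal (h0 t), Real.rpow_neg (by linarith), smul_eq_mul]
      norm_num
    constructor
    · rw [integrable_withDensity_iff_integrable_smul' hmm (by simp)]
      exact (h_ipow_int h hm h0 C hC x hx 0).congr hae
    · rw [integral_withDensity_eq_integral_toReal_smul hmm (by simp), ← integral_congr_ae hae, hf x hx]
      simp [SI]


open Classical in
/-- the square wave -/
noncomputable def sqw (u : ℝ) : ℝ := if 0 ≤ u ∧ Even ⌊u/2⌋ then 1 else 0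

lemma sqw_nonneg (u : ℝ) : 0 ≤ sqw u := by unfold sqw; split_ifs <;> norm_num
lemma sqw_le (u : ℝ) : sqw u ≤ 1 := by unfold sqw; split_ifs <;> norm_num
lemma sqw_neg (u : ℝ) (hu : u < 0) : sqw u = 0 := by
  unfold sqw; rw [if_neg]; intro h; linarith [h.1]

lemma sqw_meas : Measurable sqw := by
  unfold sqw
  refine Measurable.ite ?_ measurable_const measurable_const
  refine MeasurableSet.inter measurableSet_Ici ?_
  exact (Int.measurable_floor.comp (by fun_prop : Measurable fun u : ℝ => u/2)) (MeasurableSet.of_discrete (s := {n : ℤ | Even n}))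

lemma sqw_right (u : ℝ) : ContinuousWithinAt sqw (Ici u) u := by
  have h : sqw =ᶠ[nhdsWithin u (Ici u)] fun _ => sqw u := by
    rcases lt_or_ge u 0 with hu | hu
    · have : ∀ᶠ v in nhdsWithin u (Ici u), v < 0 := nhdsWithin_le_nhds (Iio_mem_nhds hu)
      filter_upwards [this] with v hv
      rw [sqw_neg v hv, sqw_neg u hu]
    · have h1 : u < 2 * ((⌊u/2⌋:ℝ) + 1) := by
        have := Int.lt_floor_add_one (u/2); linarith
      have : ∀ᶠ v in nhdsWithin u (Ici u), v < 2 * ((⌊u/2⌋:ℝ) + 1) := nhdsWithin_le_nhds (Iio_mem_nhds h1)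
      filter_upwards [this, self_mem_nhdsWithin] with v hv hv2
      have hv2' : u ≤ v := hv2
      have : ⌊v/2⌋ = ⌊u/2⌋ := by
        rw [Int.floor_eq_iff]
        have := Int.floor_le (u/2)
        constructor <;> linarith
      unfold sqw
      rw [this]
      simp [hu, hu.trans hv2']
  exact (continuousWithinAt_const.congr_of_eventuallyEq h rfl)

lemma sqw_shift (u : ℝ) : sqw u + sqw (u - 2) = if 0 ≤ u then 1 else 0 := by
  rcases lt_or_ge u 0 with hu | hu
  · rw [sqw_neg u hu, sqw_neg _ (by linarith), if_neg (by linarith)]; simp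
  rw [if_pos hu]
  rcases lt_or_ge u 2 with h2 | h2
  · have : ⌊u/2⌋ = 0 := by rw [Int.floor_eq_iff]; constructor <;> push_cast <;> linarith
    rw [sqw_neg (u-2) (by linarith)]
    unfold sqw
    rw [this]; simp [hu]
  · have : ⌊(u-2)/2⌋ = ⌊u/2⌋ - 1 := by
      rw [← Int.floor_sub_one]; congr 1; ring
    unfold sqw
    rw [this]
    have h3 : 0 ≤ u - 2 := by linarith
    by_cases he : Even ⌊u/2⌋
    · simp [hu, he, Int.even_sub]
    · simp [hu, he, Int.even_sub, h2]

lemma exp_ind_int (s : ℝ) (hs : 0 < s) : Integrable ((Ici (0:ℝ)).indicator fun t => Real.exp (-s * t)) := by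
  rw [integrable_indicator_iff measurableSet_Ici, integrableOn_Ici_iff_integrableOn_Ioi]
  exact integrableOn_exp_mul_Ioi (by linarith) 0

lemma sqw_exp_eq (s a : ℝ) (ha : 0 ≤ a) : (fun t => Real.exp (-s * t) * sqw (t - a)) =
    fun t => sqw (t - a) * (Ici (0:ℝ)).indicator (fun t => Real.exp (-s * t)) t := by
  funext t
  rcases lt_or_ge t 0 with h | h
  · rw [sqw_neg _ (by linarith)]; simp
  · rw [indicator_of_mem (by exact h), mul_comm]

lemma sqw_exp_int (s : ℝ) (hs : 0 < s) (a : ℝ) (ha : 0 ≤ a) : Integrable (fun t => Real.exp (-s * t) * sqw (t - a)) := by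
  rw [sqw_exp_eq s a ha]
  refine (exp_ind_int s hs).bdd_mul (c := 1) (sqw_meas.comp (by fun_prop)).aestronglyMeasurable ?_
  filter_upwards with t
  rw [Real.norm_eq_abs, abs_of_nonneg (sqw_nonneg _)]
  exact sqw_le _

lemma sqw_shift_int (s : ℝ) (a : ℝ) : ∫ t, Real.exp (-s * t) * sqw (t - a) = Real.exp (-s*a) * ∫ t, Real.exp (-s*t) * sqw t := by
  rw [← integral_const_mul, ← integral_sub_right_eq_self (fun t => Real.exp (-s*a) * (Real.exp (-s*t) * sqw t)) a]
  congr 1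
  funext t
  rw [← mul_assoc, ← Real.exp_add]
  congr 2; ring

lemma exp_int0 (s : ℝ) (hs : 0 < s) : ∫ t in Ioi (0:ℝ), Real.exp (-s*t) = 1/s := by
  rw [integral_exp_mul_Ioi (by linarith)]; simp

lemma sqw_int0 (s : ℝ) (hs : 0 < s) : ∫ t, Real.exp (-s*t) * sqw t = 1 / (s * (1 + Real.exp (-2*s))) := by
  have h1 := sqw_exp_int s hs 0 le_rfl
  have h2 := sqw_exp_int s hs 2 (by norm_num)
  have h3 := sqw_shift_int s 2
  simp only [sub_zero] at h1
  have h4 : ∫ t, (Real.exp (-s*t) * sqw t + Real.exp (-s*t) * sqw (t-2)) = 1/s := by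
    have : ∀ t, Real.exp (-s*t) * sqw t + Real.exp (-s*t) * sqw (t-2) = (Ici (0:ℝ)).indicator (fun t => Real.exp (-s * t)) t := by
      intro t
      rw [← mul_add, sqw_shift]
      simp [indicator_apply]
    simp only [this]
    rw [integral_indicator measurableSet_Ici, integral_Ici_eq_integral_Ioi, exp_int0 s hs]
  rw [integral_add h1 h2, h3] at h4
  have hp := Real.exp_pos (-2*s)
  rw [show -s*2 = -2*s by ring] at h4
  rw [eq_div_iff (by positivity)]
  have h5 : (∫ t, Real.exp (-s*t) * sqw t) * (1 + Real.exp (-2*s)) = 1/s := by linarith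
  calc _ = s * ((∫ t, Real.exp (-s*t) * sqw t) * (1 + Real.exp (-2*s))) := by ring
    _ = 1 := by rw [h5]; field_simp

lemma sqw_lap (s : ℝ) (hs : 0 < s) (a : ℝ) (ha : 0 ≤ a) :
    ∫ t in Ioi (0:ℝ), Real.exp (-s * t) * sqw (t - a) = Real.exp (-s*a) / (s * (1 + Real.exp (-2*s))) := by
  rw [← integral_Ici_eq_integral_Ioi, setIntegral_eq_integral_of_forall_compl_eq_zero, sqw_shift_int, sqw_int0 s hs]
  · ring
  · intro t ht
    have : t < 0 := by simpa using ht
    rw [sqw_neg _ (by linarith), mul_zero]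

lemma s_exp_int (r : ℝ) (hr : 0 < r) : ∫ s in Ioi (0:ℝ), s * Real.exp (-r*s) = (r^2)⁻¹ := by
  have := Real.integral_rpow_mul_exp_neg_mul_Ioi (a := 2) (r := r) (by norm_num) hr
  norm_num at this
  simpa [Real.Gamma_two] using this

lemma s_exp_integrable (r : ℝ) (hr : 0 < r) : Integrable (fun s => s * Real.exp (-r*s)) (volume.restrict (Ioi 0)) := by
  by_contra h
  have h1 := integral_undef h
  rw [s_exp_int r hr] at h1
  have : 0 < (r^2)⁻¹ := by positivity
  linarith

lemma lap_eq_SI (h : ℝ → ℝ) (hm : Measurable h) (h0 : ∀ t, 0 ≤ h t) (C : ℝ) (hC : ∀ t, h t ≤ C) (σ : ℝ → ℝ)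
    (hσ : ∀ s, 0 < s → σ s = s * ∫ t in Ioi (0:ℝ), Real.exp (-s*t) * h t) (x : ℝ) (hx : 0 < x) :
    LaplaceTransform σ x = SI h 0 x := by
  have e1 : LaplaceTransform σ x = ∫ s in Ioi (0:ℝ), ∫ t in Ioi (0:ℝ), h t * (s * Real.exp (-(x+t)*s)) := by
    unfold LaplaceTransform
    refine setIntegral_congr_fun measurableSet_Ioi fun s hs => ?_
    rw [hσ s hs, ← mul_assoc, ← integral_const_mul]
    congr 1
    funext t
    have : Real.exp (-(x+t)*s) = Real.exp (-x*s) * Real.exp (-s*t) := by rw [← Real.exp_add]; congr 1; ring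
    rw [this]; ring
  have e2 : SI h 0 x = ∫ t in Ioi (0:ℝ), ∫ s in Ioi (0:ℝ), h t * (s * Real.exp (-(x+t)*s)) := by
    have : SI h 0 x = ∫ t in Ioi (0:ℝ), h t * ((x+t)^2)⁻¹ := by simp [SI]
    rw [this]
    refine setIntegral_congr_fun measurableSet_Ioi fun t ht => ?_
    have ht' : (0:ℝ) < t := ht
    rw [integral_const_mul, s_exp_int (x+t) (by linarith)]
  rw [e1, e2]
  refine integral_integral_swap ?_
  rw [integrable_prod_iff']
  · constructor
    · filter_upwards [ae_restrict_mem measurableSet_Ioi] with t ht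
      have ht' : (0:ℝ) < t := ht
      have := (s_exp_integrable (x+t) (by linarith)).const_mul (h t)
      exact this
    · refine (h_ipow_int h hm h0 C hC x hx 0).congr ?_
      filter_upwards [ae_restrict_mem measurableSet_Ioi] with t ht
      have ht' : (0:ℝ) < t := ht
      have : ∫ s in Ioi (0:ℝ), ‖Function.uncurry (fun s t => h t * (s * Real.exp (-(x+t)*s))) (s, t)‖ = ∫ s in Ioi (0:ℝ), h t * (s * Real.exp (-(x+t)*s)) := by
        refine setIntegral_congr_fun measurableSet_Ioi fun s hs => ?_
        have hs' : (0:ℝ) < s := hs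
        have := h0 t
        simp only [Function.uncurry_apply_pair]
        rw [Real.norm_eq_abs, abs_of_nonneg (by positivity)]
      rw [this, integral_const_mul, s_exp_int (x+t) (by linarith)]
  · have : Measurable (Function.uncurry (fun s t : ℝ => h t * (s * Real.exp (-(x+t)*s)))) := by
      unfold Function.uncurry
      fun_prop
    exact this.aestronglyMeasurable

lemma lap_int (σ : ℝ → ℝ) (hm : Measurable σ) (h0 : ∀ t, 0 < σ t) (h1 : ∀ t, σ t ≤ 1) (x : ℝ) (hx : 0 < x) :
    Integrable (fun t => Real.exp (-x*t) * σ t) (volume.restrict (Ioi 0)) := by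
  have : Integrable (fun t => Real.exp (-x*t)) (volume.restrict (Ioi 0)) := integrableOn_exp_mul_Ioi (by linarith) 0
  refine this.mul_bdd (c := 1) hm.aestronglyMeasurable ?_
  filter_upwards with t
  rw [Real.norm_eq_abs, abs_of_pos (h0 _)]
  exact h1 _

lemma lap_pos (σ : ℝ → ℝ) (hm : Measurable σ) (h0 : ∀ t, 0 < σ t) (h1 : ∀ t, σ t ≤ 1) (x : ℝ) (hx : 0 < x) :
    0 < LaplaceTransform σ x := by
  unfold LaplaceTransform
  rw [integral_pos_iff_support_of_nonneg (fun t => (mul_pos (Real.exp_pos _) (h0 t)).le) (lap_int σ hm h0 h1 x hx)]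
  have : Function.support (fun t => Real.exp (-x*t) * σ t) = univ := by
    ext t; simp [(h0 t).ne']
  rw [this]; simp

lemma sig_id (ν s : ℝ) : Real.cosh (ν * s) / Real.cosh s = (Real.exp (-s*(1-ν)) + Real.exp (-s*(1+ν))) / (1 + Real.exp (-2*s)) := by
  have hp := Real.exp_pos (-2*s)
  have hc := Real.cosh_pos s
  rw [div_eq_div_iff hc.ne' (by positivity), Real.cosh_eq, Real.cosh_eq]
  have e1 : Real.exp (-s*(1-ν)) = Real.exp (-s) * Real.exp (ν*s) := by rw [← Real.exp_add]; congr 1; ring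
  have e2 : Real.exp (-s*(1+ν)) = Real.exp (-s) * Real.exp (-(ν*s)) := by rw [← Real.exp_add]; congr 1; ring
  have e3 : Real.exp (-2*s) = Real.exp (-s) * Real.exp (-s) := by rw [← Real.exp_add]; congr 1; ring
  have e4 : Real.exp (-s) * Real.exp s = 1 := by rw [← Real.exp_add]; simp
  rw [e1, e2, e3]
  linear_combination (-(Real.exp (ν*s) + Real.exp (-(ν*s)))/2) * e4

lemma sig2_le (ν s : ℝ) (hν0 : 0 ≤ ν) (hν1 : ν ≤ 1) : Real.cosh (ν * s) / Real.cosh s ≤ 1 := by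
  rw [div_le_one (Real.cosh_pos s), Real.cosh_le_cosh, abs_mul, abs_of_nonneg hν0]
  nlinarith [abs_nonneg s]

lemma sig2_pos (ν s : ℝ) : 0 < Real.cosh (ν * s) / Real.cosh s := div_pos (Real.cosh_pos _) (Real.cosh_pos _)

/-- density -/
noncomputable def hh (ν t : ℝ) : ℝ := sqw (t - (1 - ν)) + sqw (t - (1 + ν))

lemma hh_right (ν t : ℝ) : ContinuousWithinAt (hh ν) (Ici t) t := by
  have h : ∀ a : ℝ, ContinuousWithinAt (fun t => sqw (t - a)) (Ici t) t := fun a =>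
    ContinuousWithinAt.comp (g := sqw) (f := fun t => t - a) (t := Ici (t - a)) (sqw_right (t-a)) (by fun_prop) (fun v hv => by
      have : t ≤ v := hv
      simpa using this)
  exact (h _).add (h _)

lemma hh_meas (ν : ℝ) : Measurable (hh ν) := by
  have := sqw_meas
  unfold hh; fun_prop

lemma hh_lap (ν s : ℝ) (hν0 : 0 ≤ ν) (hν1 : ν ≤ 1) (hs : 0 < s) :
    IntegrableOn (fun t => Real.exp (-s*t) * hh ν t) (Ioi 0) ∧
    s * ∫ t in Ioi (0:ℝ), Real.exp (-s*t) * hh ν t = Real.cosh (ν * s) / Real.cosh s := by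
  have i1 := sqw_exp_int s hs (1-ν) (by linarith)
  have i2 := sqw_exp_int s hs (1+ν) (by linarith)
  have e : (fun t => Real.exp (-s*t) * hh ν t) = fun t => Real.exp (-s*t) * sqw (t - (1-ν)) + Real.exp (-s*t) * sqw (t - (1+ν)) := by
    funext t; unfold hh; ring
  rw [e]
  refine ⟨(i1.add i2).integrableOn, ?_⟩
  rw [integral_add i1.integrableOn i2.integrableOn, sqw_lap s hs _ (by linarith), sqw_lap s hs _ (by linarith), sig_id]
  have hp := Real.exp_pos (-2*s)
  field_simp

lemma beta_eq (y : ℝ) : nielsenBeta (y/2) = 2 * ∫ t in Ioi (0:ℝ), Real.exp (-y*t) / (1 + Real.exp (-2*t)) := by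
  have := integral_comp_mul_left_Ioi (fun u => Real.exp (-(y/2)*u) / (1 + Real.exp (-u))) 0 (b := 2) (by norm_num)
  rw [mul_zero, smul_eq_mul] at this
  have e : ∀ t : ℝ, Real.exp (-(y/2)*(2*t)) / (1 + Real.exp (-(2*t))) = Real.exp (-y*t) / (1 + Real.exp (-2*t)) := by
    intro t
    congr 2
    · ring
    · congr 1; ring
  simp only [e] at this
  rw [this, nielsenBeta]; ring

lemma beta_int (y : ℝ) (hy : 0 < y) : Integrable (fun t => Real.exp (-y*t) / (1 + Real.exp (-2*t))) (volume.restrict (Ioi 0)) := by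
  have := lap_int (fun t => (1 + Real.exp (-2*t))⁻¹) (by fun_prop) (fun t => by positivity) (fun t => by
    have := Real.exp_pos (-2*t)
    exact inv_le_one_of_one_le₀ (by linarith)) y hy
  simpa [div_eq_mul_inv] using this

lemma lap2 (ν x : ℝ) (hν0 : 0 ≤ ν) (hν1 : ν ≤ 1) (hx : 0 < x) :
    LaplaceTransform (fun x => Real.cosh (ν * x) / Real.cosh x) x
        = (1 / 2) * (nielsenBeta ((x + 1 - ν) / 2) + nielsenBeta ((x + 1 + ν) / 2)) := by
  rw [beta_eq, beta_eq, ← mul_add, ← integral_add (beta_int _ (by linarith)) (beta_int _ (by linarith)), ← mul_assoc]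
  norm_num
  unfold LaplaceTransform
  congr 1
  funext t
  simp only [sig_id]
  have e1 : Real.exp ((ν - (x+1))*t) = Real.exp (-x*t) * Real.exp (-t*(1-ν)) := by rw [← Real.exp_add]; congr 1; ring
  have e2 : Real.exp ((-ν + (-1 + -x))*t) = Real.exp (-x*t) * Real.exp (-t*(1+ν)) := by rw [← Real.exp_add]; congr 1; ring
  rw [e1, e2]
  simp only [neg_mul]
  ring

lemma sig1_eq (ν t : ℝ) : 1 - Real.cosh (ν * t) / (2 * Real.cosh t) = 1 - (1/2) * (Real.cosh (ν * t) / Real.cosh t) := by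
  have := Real.cosh_pos t
  field_simp

lemma lap1 (ν x : ℝ) (hν0 : 0 ≤ ν) (hν1 : ν ≤ 1) (hx : 0 < x) :
    LaplaceTransform (fun x => 1 - Real.cosh (ν * x) / (2 * Real.cosh x)) x
        = 1 / x - (1 / 4) * (nielsenBeta ((x + 1 - ν) / 2) + nielsenBeta ((x + 1 + ν) / 2)) := by
  have h2 := lap2 ν x hν0 hν1 hx
  have : LaplaceTransform (fun x => 1 - Real.cosh (ν * x) / (2 * Real.cosh x)) x = 1/x - (1/2) * LaplaceTransform (fun x => Real.cosh (ν * x) / Real.cosh x) x := by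
    unfold LaplaceTransform
    rw [← exp_int0 x hx, ← integral_const_mul, ← integral_sub (integrableOn_exp_mul_Ioi (by linarith) 0)
      ((lap_int _ (by fun_prop) (sig2_pos ν) (fun t => sig2_le ν t hν0 hν1) x hx).const_mul _)]
    congr 1
    funext t
    simp only [sig1_eq]; ring
  rw [this, h2]; ring

/-- Theorem: for `ν ∈ [0,1]`, the Laplace transforms of `σ₁(x) = 1 - cosh(νx)/(2 cosh x)` and
`σ₂(x) = cosh(νx)/cosh x` are generalized Stieltjes functions of order 2 (hence logarithmically
completely monotonic), with the stated expressions in terms of Nielsen's beta function. -/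
theorem stmt7 (ν : ℝ) (hν0 : 0 ≤ ν) (hν1 : ν ≤ 1) :
    IsGenStieltjes 2 (LaplaceTransform (fun x => 1 - Real.cosh (ν * x) / (2 * Real.cosh x))) ∧
    LogCompletelyMonotonic
      (LaplaceTransform (fun x => 1 - Real.cosh (ν * x) / (2 * Real.cosh x))) ∧
    IsGenStieltjes 2 (LaplaceTransform (fun x => Real.cosh (ν * x) / Real.cosh x)) ∧
    LogCompletelyMonotonic (LaplaceTransform (fun x => Real.cosh (ν * x) / Real.cosh x)) ∧
    (∀ x : ℝ, 0 < x →
      LaplaceTransform (fun x => 1 - Real.cosh (ν * x) / (2 * Real.cosh x)) x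
        = 1 / x - (1 / 4) * (nielsenBeta ((x + 1 - ν) / 2) + nielsenBeta ((x + 1 + ν) / 2))) ∧
    (∀ x : ℝ, 0 < x →
      LaplaceTransform (fun x => Real.cosh (ν * x) / Real.cosh x) x
        = (1 / 2) * (nielsenBeta ((x + 1 - ν) / 2) + nielsenBeta ((x + 1 + ν) / 2))) := by
  have a0 : ∀ t, 0 ≤ hh ν t := fun t => add_nonneg (sqw_nonneg _) (sqw_nonneg _)
  have a2 : ∀ t, hh ν t ≤ 2 := fun t => by
    have h1 := sqw_le (t - (1-ν))
    have h2 := sqw_le (t - (1+ν))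
    unfold hh; linarith
  have am := hh_meas ν
  have b0 : ∀ t, 0 ≤ 1 - (1/2) * hh ν t := fun t => by linarith [a2 t]
  have b1 : ∀ t, 1 - (1/2) * hh ν t ≤ 1 := fun t => by linarith [a0 t]
  have bm : Measurable (fun t => 1 - (1/2) * hh ν t) := by fun_prop
  have br : ∀ t, 0 < t → ContinuousWithinAt (fun t => 1 - (1/2) * hh ν t) (Ici t) t := fun t _ =>
    continuousWithinAt_const.sub (continuousWithinAt_const.mul (hh_right ν t))
  have s2 := lap_eq_SI (hh ν) am a0 2 a2 (fun x => Real.cosh (ν * x) / Real.cosh x)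
    (fun s hs => (hh_lap ν s hν0 hν1 hs).2.symm)
  have s1 := lap_eq_SI (fun t => 1 - (1/2) * hh ν t) bm b0 1 b1 (fun x => 1 - Real.cosh (ν * x) / (2 * Real.cosh x))
    (fun s hs => by
      have h := hh_lap ν s hν0 hν1 hs
      have e : (fun t => Real.exp (-s*t) * (1 - (1/2) * hh ν t)) = fun t => Real.exp (-s*t) - (1/2) * (Real.exp (-s*t) * hh ν t) := by
        funext t; ring
      simp only [e]
      rw [integral_sub (integrableOn_exp_mul_Ioi (by linarith) 0) (h.1.const_mul _), integral_const_mul, exp_int0 s hs, sig1_eq, ← h.2]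
      field_simp)
  have p2 := fun x hx => lap_pos (fun x => Real.cosh (ν * x) / Real.cosh x) (by fun_prop) (sig2_pos ν) (fun t => sig2_le ν t hν0 hν1) x hx
  have p1 := fun x hx => lap_pos (fun x => 1 - Real.cosh (ν * x) / (2 * Real.cosh x)) (by fun_prop)
    (fun t => by
      rw [sig1_eq]; linarith [sig2_le ν t hν0 hν1])
    (fun t => by
      rw [sig1_eq]; linarith [sig2_pos ν t]) x hx
  exact ⟨stieltjes_of_SI _ _ bm b0 1 b1 s1, lcm_of_SI _ _ bm b0 1 b1 br s1 p1,
    stieltjes_of_SI _ _ am a0 2 a2 s2, lcm_of_SI _ _ am a0 2 a2 (fun t _ => hh_right ν t) s2 p2,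
    fun x hx => lap1 ν x hν0 hν1 hx, fun x hx => lap2 ν x hν0 hν1 hx⟩
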